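/- There is a constant c > 0 such that for any θ ∈ (0, 1/2) and any μ with 0 < μ ≤ c · min{θ n^{-1}, n^{-5/4}}, for every w ∈ ℝ^{n−1} with 1/(20√5) ≤ ‖w‖ ≤ √((4n−1)/(4n)), the Hessian in w of the expected objective satisfies wᵀ ∇²_w E[h_μ(q(w)ᵀ x)] w / ‖w‖² ≤ −θ/(2√(2π)), where x ∈ ℝ^n is a random vector with i.i.d. BG(θ) entries. -/

import Mathlib

open MeasureTheory ProbabilityTheory Real Matrix
open scoped RealInnerProductSpace ENNReal NNReal

noncomputable section

/-- The Bernoulli–Gaussian law `BG(θ)`: with probability `θ` a standard Gaussian,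
with probability `1-θ` a point mass at `0`. -/
def bg (θ : ℝ) : Measure ℝ :=
  θ.toNNReal • gaussianReal 0 1 + (1 - θ).toNNReal • Measure.dirac 0

instance bg.instIsFiniteMeasure (θ : ℝ) : IsFiniteMeasure (bg θ) := by
  unfold bg; infer_instance

/-- Law of an `n × p` matrix with i.i.d. `BG(θ)` entries. -/
def bgMatrix (θ : ℝ) (n p : ℕ) : Measure (Fin n → Fin p → ℝ) :=
  Measure.pi fun _ => Measure.pi fun _ => bg θ

/-- Law of a vector in `ℝ^n` with i.i.d. `BG(θ)` entries. -/
def bgVec (θ : ℝ) (n : ℕ) : Measure (Fin n → ℝ) :=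
  Measure.pi fun _ => bg θ

/-- The smooth sparsity surrogate `h_μ(z) = μ log cosh (z/μ)`. -/
def hmu (μ z : ℝ) : ℝ := μ * Real.log (Real.cosh (z / μ))

/-- Reparametrization `q(w) = (w, √(1-‖w‖²))` with `w` in the unit ball of `ℝ^{n-1}`. -/
def qmap (n : ℕ) (w : EuclideanSpace ℝ (Fin (n - 1))) : Fin n → ℝ :=
  fun i => if h : (i : ℕ) < n - 1 then w ⟨i, h⟩ else Real.sqrt (1 - ‖w‖ ^ 2)

/-- `f(q; Y) = (1/p) ∑ₖ h_μ(qᵀ yₖ)`. -/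
def ffun (n p : ℕ) (μ : ℝ) (Y : Matrix (Fin n) (Fin p) ℝ)
    (q : EuclideanSpace ℝ (Fin n)) : ℝ :=
  (p : ℝ)⁻¹ * ∑ k : Fin p, hmu μ (∑ i : Fin n, q i * Y i k)

/-- `g(w; Y) = f(q(w); Y)`. -/
def gfun (n p : ℕ) (μ : ℝ) (Y : Matrix (Fin n) (Fin p) ℝ)
    (w : EuclideanSpace ℝ (Fin (n - 1))) : ℝ :=
  (p : ℝ)⁻¹ * ∑ k : Fin p, hmu μ (∑ i : Fin n, qmap n w i * Y i k)

/-- Gradient `∇g(w; Y)` in `w`. -/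
def gradg (n p : ℕ) (μ : ℝ) (Y : Matrix (Fin n) (Fin p) ℝ)
    (w : EuclideanSpace ℝ (Fin (n - 1))) : EuclideanSpace ℝ (Fin (n - 1)) :=
  gradient (gfun n p μ Y) w

/-- Hessian `∇²g(w; Y)` in `w`, as a continuous linear map. -/
def hessg (n p : ℕ) (μ : ℝ) (Y : Matrix (Fin n) (Fin p) ℝ)
    (w : EuclideanSpace ℝ (Fin (n - 1))) :
    EuclideanSpace ℝ (Fin (n - 1)) →L[ℝ] EuclideanSpace ℝ (Fin (n - 1)) :=
  fderiv ℝ (gradg n p μ Y) w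

/-- The set `Γ = {w : ‖w‖ < √((4n-1)/(4n))}`. -/
def GammaSet (n : ℕ) : Set (EuclideanSpace ℝ (Fin (n - 1))) :=
  {w | ‖w‖ < Real.sqrt ((4 * (n : ℝ) - 1) / (4 * n))}

/-- Spectral (`ℓ²→ℓ²` operator) norm of а matrix. -/
def specNorm {m k : ℕ} (M : Matrix (Fin m) (Fin k) ℝ) : ℝ :=
  ‖LinearMap.toContinuousLinearMap (Matrix.toEuclideanLin M)‖

/-- Largest magnitude of an entry of a matrix. -/
def Minf {m k : ℕ} (M : Matrix (Fin m) (Fin k) ℝ) : ℝ := ⨆ i, ⨆ j, |M i j|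

/-- Condition number: ratio of largest to smallest singular value. -/
def kappa {n : ℕ} (s : Fin n → ℝ) : ℝ := (⨆ i, s i) / (⨅ i, s i)

/-- Signed standard basis vectors `{± e_i}` of `ℝ^n`. -/
def SignedBasis (n : ℕ) : Set (EuclideanSpace ℝ (Fin n)) :=
  {b | ∃ i : Fin n, b = EuclideanSpace.single i (1 : ℝ) ∨ b = -EuclideanSpace.single i (1 : ℝ)}

/-- Set of local minimizers of `f(·; Y)` over the unit sphere `S^{n-1}`. -/
def LocalMins (n p : ℕ) (μ : ℝ) (Y : Matrix (Fin n) (Fin p) ℝ) :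
    Set (EuclideanSpace ℝ (Fin n)) :=
  {q | q ∈ Metric.sphere (0 : EuclideanSpace ℝ (Fin n)) 1 ∧
       IsLocalMinOn (ffun n p μ Y) (Metric.sphere (0 : EuclideanSpace ℝ (Fin n)) 1) q}

/-- Expected objective `E_x[h_μ(q(w)ᵀ x)]` for `x` with i.i.d. `BG(θ)` entries. -/
def Gexp (n : ℕ) (θ μ : ℝ) (w : EuclideanSpace ℝ (Fin (n - 1))) : ℝ :=
  ∫ x, hmu μ (∑ i : Fin n, qmap n w i * x i) ∂(bgVec θ n)

/-!
Conditionally on the support `J` of `x`, the scalar `qᵀ x` is a centred Gaussian of variance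
`∑_{i ∈ J} q_i²`, so the expected objective is a mixture over `J` of the values
`φ (√(∑_{i ∈ J} q_i²))`, where `φ s = E h_μ(s V)` for a standard Gaussian `V`. The Hessian form
`wᵀ ∇² w` is the second derivative at `t = 1` along the ray `t ↦ t w`, taken term by term.

If the last index is not in `J`, the standard deviation is linear in `t`, and the term contributes
at most `sup z² h_μ''(z) ≤ μ`. If it is, the standard deviation is the concave function
`√(1 - α t²)` with `α = ∑_{i ∉ J} q_i²`; since `z h_μ'(z) ≥ |z| - μ` gives
`s φ'(s) ≥ s √(2/π) - μ`, the concavity wins and the term contributes at most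
`-α (√(2/π) - 2 μ / √(1 - ‖w‖²))`. The expectation of `α`, restricted to the supports containing
the last index, is `θ (1 - θ) ‖w‖²`.
-/

open Filter
open scoped Topology

section Surrogate

variable {μ : ℝ}

theorem hasDerivAt_tanh (x : ℝ) : HasDerivAt Real.tanh (1 / Real.cosh x ^ 2) x := by
  have h : HasDerivAt (fun y => Real.sinh y / Real.cosh y)
      ((Real.cosh x * Real.cosh x - Real.sinh x * Real.sinh x) / Real.cosh x ^ 2) x :=
    (Real.hasDerivAt_sinh x).div (Real.hasDerivAt_cosh x) (Real.cosh_pos x).ne'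
  rw [← sq, ← sq, Real.cosh_sq_sub_sinh_sq] at h
  exact h.congr_of_eventuallyEq (.of_forall Real.tanh_eq_sinh_div_cosh)

theorem abs_le_cosh (y : ℝ) : |y| ≤ Real.cosh y := by
  rw [← Real.cosh_abs]
  exact (Real.self_le_sinh_iff.2 (abs_nonneg y)).trans (Real.sinh_lt_cosh _).le

theorem mul_one_sub_tanh_le_one {y : ℝ} (hy : 0 ≤ y) : y * (1 - Real.tanh y) ≤ 1 := by
  have hexp : 1 - Real.tanh y = Real.exp (-y) / Real.cosh y := by
    rw [Real.tanh_eq_sinh_div_cosh, ← Real.cosh_sub_sinh]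
    field_simp
  rw [hexp, ← mul_div_assoc, div_le_one (Real.cosh_pos y)]
  calc y * Real.exp (-y) ≤ y * 1 := by gcongr; exact Real.exp_le_one_iff.2 (by linarith)
    _ ≤ Real.cosh y := by simpa [abs_of_nonneg hy] using abs_le_cosh y

/-- The first derivative `h_μ'` of the surrogate `h_μ`. -/
def hmuDeriv (μ z : ℝ) : ℝ := Real.tanh (z / μ)

/-- The second derivative `h_μ''` of the surrogate `h_μ`. -/
def hmuDeriv₂ (μ z : ℝ) : ℝ := 1 / (μ * Real.cosh (z / μ) ^ 2)

theorem hasDerivAt_hmu (hμ : 0 < μ) (z : ℝ) : HasDerivAt (hmu μ) (hmuDeriv μ z) z := by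
  have h := (((hasDerivAt_id z).div_const μ).cosh.log (Real.cosh_pos _).ne').const_mul μ
  refine h.congr_deriv ?_
  rw [hmuDeriv, Real.tanh_eq_sinh_div_cosh, id]
  field_simp

theorem hasDerivAt_hmuDeriv (z : ℝ) : HasDerivAt (hmuDeriv μ) (hmuDeriv₂ μ z) z := by
  refine ((hasDerivAt_tanh (z / μ)).comp z ((hasDerivAt_id z).div_const μ)).congr_deriv ?_
  rw [hmuDeriv₂, one_div_mul_one_div, mul_comm]

theorem hmu_zero : hmu μ 0 = 0 := by simp [hmu]

theorem hmuDeriv_zero : hmuDeriv μ 0 = 0 := by simp [hmuDeriv]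

theorem continuous_hmu (hμ : 0 < μ) : Continuous (hmu μ) :=
  continuous_iff_continuousAt.2 fun z => (hasDerivAt_hmu hμ z).continuousAt

theorem continuous_hmuDeriv : Continuous (hmuDeriv μ) :=
  continuous_iff_continuousAt.2 fun z => (hasDerivAt_hmuDeriv z).continuousAt

theorem continuous_hmuDeriv₂ (hμ : 0 < μ) : Continuous (hmuDeriv₂ μ) :=
  continuous_const.div (by fun_prop) fun z => by positivity [Real.cosh_pos (z / μ)]

theorem abs_hmuDeriv_le_one (z : ℝ) : |hmuDeriv μ z| ≤ 1 :=
  (Real.abs_tanh_lt_one _).le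

theorem hmuDeriv₂_nonneg (hμ : 0 < μ) (z : ℝ) : 0 ≤ hmuDeriv₂ μ z := by
  unfold hmuDeriv₂
  positivity

theorem abs_hmuDeriv₂_le (hμ : 0 < μ) (z : ℝ) : |hmuDeriv₂ μ z| ≤ 1 / μ := by
  rw [abs_of_nonneg (hmuDeriv₂_nonneg hμ z), hmuDeriv₂]
  exact one_div_le_one_div_of_le hμ
    (le_mul_of_one_le_right hμ.le (one_le_pow₀ (Real.one_le_cosh _)))

theorem sq_mul_hmuDeriv₂_le (hμ : 0 < μ) (z : ℝ) : z ^ 2 * hmuDeriv₂ μ z ≤ μ := by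
  have h : (z / μ) ^ 2 ≤ Real.cosh (z / μ) ^ 2 :=
    sq_le_sq.2 ((abs_le_cosh _).trans (le_abs_self _))
  rw [hmuDeriv₂, mul_one_div, div_le_iff₀ (by positivity)]
  rw [div_pow, div_le_iff₀ (by positivity)] at h
  linarith

theorem abs_sub_le_mul_hmuDeriv (hμ : 0 < μ) (z : ℝ) : |z| - μ ≤ z * hmuDeriv μ z := by
  have of_nonneg : ∀ z, 0 ≤ z → z - μ ≤ z * hmuDeriv μ z := fun z hz => by
    have h := mul_one_sub_tanh_le_one (div_nonneg hz hμ.le)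
    rw [div_mul_eq_mul_div, div_le_one hμ] at h
    unfold hmuDeriv
    linarith
  rcases le_total 0 z with hz | hz
  · simpa only [abs_of_nonneg hz] using of_nonneg z hz
  · simpa [abs_of_nonpos hz, hmuDeriv, neg_div, Real.tanh_neg] using
      of_nonneg (-z) (neg_nonneg.2 hz)

end Surrogate

section ParametricIntegral

theorem abs_le_mul_abs_of_hasDerivAt_of_abs_le {k k' : ℝ → ℝ} {K : ℝ}
    (hk : ∀ z, HasDerivAt k (k' z) z) (hk0 : k 0 = 0) (hK : ∀ z, |k' z| ≤ K) (z : ℝ) :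
    |k z| ≤ K * |z| := by
  simpa [hk0] using convex_univ.norm_image_sub_le_of_norm_hasDerivWithin_le
    (fun z _ => (hk z).hasDerivWithinAt) (fun z _ => hK z) (Set.mem_univ 0) (Set.mem_univ z)

variable {X E F : Type*} [MeasurableSpace X] {ν : Measure X}
  [NormedAddCommGroup E] [NormedSpace ℝ E] [NormedAddCommGroup F] [NormedSpace ℝ F]
  {k k' : ℝ → ℝ} {K : ℝ}

theorem hasFDerivAt_integral_comp_smul (hk : ∀ z, HasDerivAt k (k' z) z) (hk0 : k 0 = 0)
    (hk' : Continuous k') (hK : ∀ z, |k' z| ≤ K) {ℓ : X → E →L[ℝ] ℝ}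
    (hℓ : AEStronglyMeasurable ℓ ν) {c : X → F} (hc : AEStronglyMeasurable c ν)
    (hℓc : Integrable (fun x => ‖ℓ x‖ * ‖c x‖) ν) (q : E) :
    Integrable (fun x => k' (ℓ x q) • (ℓ x).smulRight (c x)) ν ∧
      HasFDerivAt (fun q => ∫ x, k (ℓ x q) • c x ∂ν)
        (∫ x, k' (ℓ x q) • (ℓ x).smulRight (c x) ∂ν) q := by
  have hkc : Continuous k := continuous_iff_continuousAt.2 fun z => (hk z).continuousAt
  have heval (q : E) : AEStronglyMeasurable (fun x => ℓ x q) ν :=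
    (ContinuousLinearMap.apply ℝ ℝ q).continuous.comp_aestronglyMeasurable hℓ
  have hmeas (q : E) : AEStronglyMeasurable (fun x => k (ℓ x q) • c x) ν :=
    (hkc.comp_aestronglyMeasurable (heval q)).smul hc
  have hmeas' : AEStronglyMeasurable (fun x => k' (ℓ x q) • (ℓ x).smulRight (c x)) ν := by
    have : Continuous fun p : (E →L[ℝ] ℝ) × F => p.1.smulRight p.2 := by fun_prop
    exact (hk'.comp_aestronglyMeasurable (heval q)).smul
      (this.comp_aestronglyMeasurable (hℓ.prodMk hc))
  have hbound' (x : X) (q : E) :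
      ‖k' (ℓ x q) • (ℓ x).smulRight (c x)‖ ≤ K * (‖ℓ x‖ * ‖c x‖) := by
    rw [norm_smul, ContinuousLinearMap.norm_smulRight_apply]
    exact mul_le_mul_of_nonneg_right (hK _) (by positivity)
  have hbound (x : X) : ‖k (ℓ x q) • c x‖ ≤ K * (‖ℓ x‖ * ‖c x‖) * ‖q‖ := by
    have hK0 : 0 ≤ K := (abs_nonneg _).trans (hK 0)
    calc ‖k (ℓ x q) • c x‖ = |k (ℓ x q)| * ‖c x‖ := norm_smul _ _
      _ ≤ K * (‖ℓ x‖ * ‖q‖) * ‖c x‖ := by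
          gcongr
          exact (abs_le_mul_abs_of_hasDerivAt_of_abs_le hk hk0 hK _).trans
            (mul_le_mul_of_nonneg_left ((ℓ x).le_opNorm q) hK0)
      _ = K * (‖ℓ x‖ * ‖c x‖) * ‖q‖ := by ring
  have hderiv (x : X) (q : E) : HasFDerivAt (fun q => k (ℓ x q) • c x)
      (k' (ℓ x q) • (ℓ x).smulRight (c x)) q := by
    refine (((hk (ℓ x q)).hasFDerivAt.comp q (ℓ x).hasFDerivAt).smul_const (c x)).congr_fderiv ?_
    ext v
    simp [smul_smul, mul_comm]
  refine ⟨(hℓc.const_mul K).mono' hmeas' (.of_forall fun x => hbound' x q), ?_⟩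
  exact hasFDerivAt_integral_of_dominated_of_fderiv_le (𝕜 := ℝ) univ_mem (.of_forall hmeas)
    (((hℓc.const_mul K).mul_const ‖q‖).mono' (hmeas q) (.of_forall hbound)) hmeas'
    (.of_forall fun x q _ => hbound' x q) (hℓc.const_mul K) (.of_forall fun x q _ => hderiv x q)

theorem hasDerivAt_integral_comp_mul (hk : ∀ z, HasDerivAt k (k' z) z) (hk0 : k 0 = 0)
    (hk' : Continuous k') (hK : ∀ z, |k' z| ≤ K) {a c : X → ℝ}
    (ha : AEStronglyMeasurable a ν) (hc : AEStronglyMeasurable c ν)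
    (hac : Integrable (fun x => a x * c x) ν) (s : ℝ) :
    HasDerivAt (fun s => ∫ x, k (s * a x) * c x ∂ν) (∫ x, k' (s * a x) * (a x * c x) ∂ν) s := by
  have hℓ : AEStronglyMeasurable (fun x => (ContinuousLinearMap.id ℝ ℝ).smulRight (a x)) ν :=
    Continuous.comp_aestronglyMeasurable (by fun_prop) ha
  obtain ⟨hac', hderiv⟩ := hasFDerivAt_integral_comp_smul hk hk0 hk' hK hℓ hc
    (by simpa [abs_mul] using hac.norm) s
  refine hderiv.hasDerivAt.congr_deriv ?_
  rw [ContinuousLinearMap.integral_apply hac']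
  simp

end ParametricIntegral

section GaussianSmoothing

variable {μ : ℝ}

/-- The Gaussian smoothing `φ(s) = E h_μ(s V)` of the surrogate, for a standard Gaussian `V`. -/
def gaussHmu (μ s : ℝ) : ℝ := ∫ v, hmu μ (s * v) ∂gaussianReal 0 1

/-- The first derivative `φ'(s) = E[h_μ'(s V) V]` of `gaussHmu`. -/
def gaussHmuDeriv (μ s : ℝ) : ℝ := ∫ v, hmuDeriv μ (s * v) * v ∂gaussianReal 0 1

/-- The second derivative `φ''(s) = E[h_μ''(s V) V²]` of `gaussHmu`. -/
def gaussHmuDeriv₂ (μ s : ℝ) : ℝ := ∫ v, hmuDeriv₂ μ (s * v) * v ^ 2 ∂gaussianReal 0 1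

theorem integrable_id_gaussianReal : Integrable (fun v : ℝ => v) (gaussianReal 0 1) :=
  (memLp_id_gaussianReal 1).integrable le_rfl

theorem integrable_sq_gaussianReal : Integrable (fun v : ℝ => v ^ 2) (gaussianReal 0 1) :=
  (memLp_id_gaussianReal 2).integrable_sq

theorem hasDerivAt_gaussHmu (hμ : 0 < μ) (s : ℝ) :
    HasDerivAt (gaussHmu μ) (gaussHmuDeriv μ s) s := by
  have h := hasDerivAt_integral_comp_mul (hasDerivAt_hmu hμ) hmu_zero continuous_hmuDeriv
    abs_hmuDeriv_le_one (a := fun v => v) (c := fun _ => 1) aestronglyMeasurable_id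
    aestronglyMeasurable_const (by simpa using integrable_id_gaussianReal) s
  simp only [mul_one] at h
  exact h

theorem hasDerivAt_gaussHmuDeriv (hμ : 0 < μ) (s : ℝ) :
    HasDerivAt (gaussHmuDeriv μ) (gaussHmuDeriv₂ μ s) s := by
  have h := hasDerivAt_integral_comp_mul hasDerivAt_hmuDeriv hmuDeriv_zero
    (continuous_hmuDeriv₂ hμ) (abs_hmuDeriv₂_le hμ) (a := fun v => v) (c := fun v => v)
    aestronglyMeasurable_id aestronglyMeasurable_id
    (by simpa only [← sq] using integrable_sq_gaussianReal) s
  simp only [← sq] at h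
  exact h

theorem sq_mul_gaussHmuDeriv₂_le (hμ : 0 < μ) (s : ℝ) : s ^ 2 * gaussHmuDeriv₂ μ s ≤ μ := by
  have hnonneg (v : ℝ) : 0 ≤ s ^ 2 * (hmuDeriv₂ μ (s * v) * v ^ 2) := by
    have := hmuDeriv₂_nonneg hμ (s * v)
    positivity
  have hle (v : ℝ) : s ^ 2 * (hmuDeriv₂ μ (s * v) * v ^ 2) ≤ μ := by
    linarith [sq_mul_hmuDeriv₂_le hμ (s * v)]
  calc s ^ 2 * gaussHmuDeriv₂ μ s
      = ∫ v, s ^ 2 * (hmuDeriv₂ μ (s * v) * v ^ 2) ∂gaussianReal 0 1 := by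
        rw [gaussHmuDeriv₂, integral_const_mul]
    _ ≤ ∫ _, μ ∂gaussianReal 0 1 :=
        integral_mono_of_nonneg (.of_forall hnonneg) (integrable_const _) (.of_forall hle)
    _ = μ := by simp

theorem sqrt_two_div_pi : √(2 / π) = 2 / √(2 * π) := by
  rw [show 2 / π = 2 ^ 2 / (2 * π) by field_simp,
    Real.sqrt_div (by norm_num), Real.sqrt_sq zero_le_two]

theorem integral_abs_gaussianReal : ∫ v, |v| ∂gaussianReal 0 1 = √(2 / π) := by
  have hhalf : ∫ x in Set.Ioi (0 : ℝ), x * Real.exp (-(1 / 2) * x ^ 2) = 1 := by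
    have h := integral_rpow_mul_exp_neg_mul_rpow (p := 2) (q := 1) (b := 1 / 2) two_pos
      (by norm_num) (by norm_num)
    norm_num [Real.rpow_neg_one] at h ⊢
    exact h
  have hdensity (x : ℝ) : gaussianPDFReal 0 1 x • |x|
      = (√(2 * π))⁻¹ * (|x| * Real.exp (-(1 / 2) * |x| ^ 2)) := by
    simp [gaussianPDFReal]
    ring_nf
  calc ∫ v, |v| ∂gaussianReal 0 1
      = (√(2 * π))⁻¹ * ∫ x : ℝ, |x| * Real.exp (-(1 / 2) * |x| ^ 2) := by
        rw [integral_gaussianReal_eq_integral_smul one_ne_zero]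
        simp_rw [hdensity]
        rw [integral_const_mul]
    _ = (√(2 * π))⁻¹ * 2 := by
        rw [integral_comp_abs (f := fun x => x * Real.exp (-(1 / 2) * x ^ 2)), hhalf, mul_one]
    _ = √(2 / π) := by rw [sqrt_two_div_pi, inv_mul_eq_div]

theorem le_mul_gaussHmuDeriv {s : ℝ} (hμ : 0 < μ) (hs : 0 ≤ s) :
    s * √(2 / π) - μ ≤ s * gaussHmuDeriv μ s := by
  have hlin : Integrable (fun v => s * |v|) (gaussianReal 0 1) :=
    integrable_id_gaussianReal.abs.const_mul s
  have hmeas : Continuous fun v => hmuDeriv μ (s * v) * v :=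
    (continuous_hmuDeriv.comp (by fun_prop)).mul continuous_id
  have hderiv : Integrable (fun v => hmuDeriv μ (s * v) * v) (gaussianReal 0 1) := by
    refine integrable_id_gaussianReal.abs.mono' hmeas.aestronglyMeasurable (.of_forall fun v => ?_)
    rw [Real.norm_eq_abs, abs_mul]
    exact mul_le_of_le_one_left (abs_nonneg _) (abs_hmuDeriv_le_one _)
  have hle (v : ℝ) : s * |v| - μ ≤ s * (hmuDeriv μ (s * v) * v) := by
    have h := abs_sub_le_mul_hmuDeriv hμ (s * v)
    rw [abs_mul, abs_of_nonneg hs] at h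
    linarith
  calc s * √(2 / π) - μ = ∫ v, (s * |v| - μ) ∂gaussianReal 0 1 := by
        rw [integral_sub hlin (integrable_const _), integral_const_mul,
          integral_abs_gaussianReal]
        simp
    _ ≤ ∫ v, s * (hmuDeriv μ (s * v) * v) ∂gaussianReal 0 1 :=
        integral_mono (hlin.sub (integrable_const _)) (hderiv.const_mul s) hle
    _ = s * gaussHmuDeriv μ s := by rw [gaussHmuDeriv, integral_const_mul]

end GaussianSmoothing

section SupportWeight

variable {ι : Type*} [Fintype ι] [DecidableEq ι] {θ : ℝ}

/-- The probability that a random subset of `ι`, containing each element independently with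
probability `θ`, equals `J`. -/
def supportWeight (θ : ℝ) (J : Finset ι) : ℝ := θ ^ J.card * (1 - θ) ^ Jᶜ.card

theorem supportWeight_nonneg (hθ : θ ∈ Set.Icc 0 1) (J : Finset ι) : 0 ≤ supportWeight θ J :=
  mul_nonneg (pow_nonneg hθ.1 _) (pow_nonneg (sub_nonneg.2 hθ.2) _)

theorem sum_supportWeight_subset_disjoint {S T : Finset ι} (hST : Disjoint S T) :
    ∑ J with S ⊆ J ∧ Disjoint T J, supportWeight θ J = θ ^ S.card * (1 - θ) ^ T.card := by
  have hexpand := Fintype.prod_add (fun j => if j ∉ T then θ else 0)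
    (fun j => if j ∉ S then 1 - θ else 0)
  have hfactor (j : ι) : (if j ∉ T then θ else 0) + (if j ∉ S then 1 - θ else 0) =
      (if j ∈ S then θ else 1) * if j ∈ T then 1 - θ else 1 := by
    have hdisj : j ∈ S → j ∉ T := fun hS => Finset.disjoint_left.1 hST hS
    by_cases hS : j ∈ S <;> by_cases hT : j ∈ T <;> simp_all
  have hterm (J : Finset ι) : (∏ j ∈ J, if j ∉ T then θ else 0) *
      (∏ j ∈ Jᶜ, if j ∉ S then 1 - θ else 0) =
        if S ⊆ J ∧ Disjoint T J then supportWeight θ J else 0 := by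
    simp only [Finset.prod_ite_zero, ← Finset.disjoint_right, disjoint_compl_right_iff,
      Finset.prod_const, ite_zero_mul_ite_zero, and_comm, supportWeight]
  simp_rw [hfactor, hterm, Finset.prod_mul_distrib, Finset.prod_ite_mem, Finset.univ_inter,
    Finset.prod_const] at hexpand
  rw [Finset.sum_filter, hexpand]

theorem sum_supportWeight_notMem (l : ι) : ∑ J with l ∉ J, supportWeight θ J = 1 - θ := by
  simpa using sum_supportWeight_subset_disjoint (θ := θ) (Finset.disjoint_empty_left {l})

theorem sum_supportWeight_mul_sum_compl (l : ι) (u : ι → ℝ) :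
    ∑ J with l ∈ J, supportWeight θ J * ∑ i ∈ Jᶜ, u i = θ * (1 - θ) * ∑ i ∈ {l}ᶜ, u i := by
  have hpair {i : ι} (hi : i ≠ l) :
      ∑ J with l ∈ J ∧ i ∉ J, supportWeight θ J = θ * (1 - θ) := by
    simpa using sum_supportWeight_subset_disjoint (θ := θ)
      (Finset.disjoint_singleton.2 hi.symm)
  calc ∑ J with l ∈ J, supportWeight θ J * ∑ i ∈ Jᶜ, u i
      = ∑ i ∈ {l}ᶜ, ∑ J with l ∈ J ∧ i ∉ J, supportWeight θ J * u i := by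
        simp_rw [Finset.mul_sum]
        refine Finset.sum_comm' fun J i => ?_
        simp only [Finset.mem_filter_univ, Finset.mem_compl, Finset.mem_singleton]
        grind
    _ = ∑ i ∈ {l}ᶜ, θ * (1 - θ) * u i := by
        refine Finset.sum_congr rfl fun i hi => ?_
        rw [← Finset.sum_mul, hpair (by simpa using hi)]
    _ = θ * (1 - θ) * ∑ i ∈ {l}ᶜ, u i := (Finset.mul_sum _ _ _).symm

end SupportWeight

section CharFun

variable {ι : Type*}

theorem charFun_sum_smul {E : Type*} [NormedAddCommGroup E] [InnerProductSpace ℝ E]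
    [MeasurableSpace E] [OpensMeasurableSpace E] (s : Finset ι) (p : ι → ℝ≥0) (ν : ι → Measure E)
    [∀ i, IsFiniteMeasure (ν i)] (t : E) :
    charFun (∑ i ∈ s, p i • ν i) t = ∑ i ∈ s, p i • charFun (ν i) t := by
  simp_rw [charFun_eq_integral_innerProbChar]
  rw [integral_finsetSum_measure fun i _ => (BoundedContinuousFunction.integrable _ _)]
  simp_rw [integral_smul_nnreal_measure]

theorem charFun_map_sum_mul_pi [Fintype ι] (ν : ι → Measure ℝ) [∀ i, IsProbabilityMeasure (ν i)]
    (q : ι → ℝ) (t : ℝ) :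
    charFun ((Measure.pi ν).map fun x => ∑ i, q i * x i) t = ∏ i, charFun (ν i) (q i * t) := by
  have hscale (i : ι) : IsProbabilityMeasure ((ν i).map (q i * ·)) :=
    Measure.isProbabilityMeasure_map (by fun_prop)
  have hmap : (Measure.pi ν).map (fun x => ∑ i, q i * x i) =
      (Measure.pi fun i => (ν i).map (q i * ·)).map fun x => ∑ i, x i := by
    rw [← Measure.pi_map_pi (by fun_prop), Measure.map_map (by fun_prop) (by fun_prop)]
    rfl
  rw [hmap, charFun_map_sum_pi_eq_prod, Finset.prod_apply]
  simp_rw [charFun_map_mul]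

end CharFun

section BernoulliGaussian

variable {ι : Type*} [Fintype ι] [DecidableEq ι] {θ μ : ℝ}

theorem isProbabilityMeasure_bg (hθ : θ ∈ Set.Icc 0 1) : IsProbabilityMeasure (bg θ) := by
  constructor
  have hsum : θ.toNNReal + (1 - θ).toNNReal = 1 := by
    rw [← Real.toNNReal_add hθ.1 (sub_nonneg.2 hθ.2), add_sub_cancel, Real.toNNReal_one]
  simp only [bg, Measure.coe_add, Pi.add_apply, Measure.smul_apply, measure_univ,
    ENNReal.smul_def, smul_eq_mul, mul_one]
  exact_mod_cast hsum

theorem charFun_bg (hθ : θ ∈ Set.Icc 0 1) (t : ℝ) :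
    charFun (bg θ) t = θ * Complex.exp (-(t ^ 2 / 2)) + (1 - θ) := by
  rw [charFun_eq_integral_innerProbChar, bg,
    integral_add_measure (BoundedContinuousFunction.integrable _ _)
      (BoundedContinuousFunction.integrable _ _),
    integral_smul_nnreal_measure, integral_smul_nnreal_measure,
    ← charFun_eq_integral_innerProbChar, ← charFun_eq_integral_innerProbChar,
    charFun_gaussianReal, charFun_dirac]
  simp [NNReal.smul_def, hθ.1, hθ.2]

theorem map_sum_mul_pi_bg (hθ : θ ∈ Set.Icc 0 1) (q : ι → ℝ) :
    (Measure.pi fun _ => bg θ).map (fun x => ∑ i, q i * x i) =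
      ∑ J : Finset ι, (supportWeight θ J).toNNReal •
        gaussianReal 0 (∑ i ∈ J, q i ^ 2).toNNReal := by
  have := isProbabilityMeasure_bg hθ
  refine Measure.ext_of_charFun (funext fun t => ?_)
  rw [charFun_map_sum_mul_pi, charFun_sum_smul]
  simp_rw [charFun_bg hθ]
  rw [Fintype.prod_add]
  refine Finset.sum_congr rfl fun J _ => ?_
  have hvar : 0 ≤ ∑ i ∈ J, q i ^ 2 := Finset.sum_nonneg fun i _ => sq_nonneg _
  rw [Finset.prod_mul_distrib, ← Complex.exp_sum, Finset.prod_const, Finset.prod_const,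
    charFun_gaussianReal, NNReal.smul_def, Real.coe_toNNReal _ (supportWeight_nonneg hθ J),
    Complex.real_smul, supportWeight, Real.coe_toNNReal _ hvar]
  push_cast
  rw [mul_right_comm, Finset.sum_neg_distrib, ← Finset.sum_div, Finset.sum_mul]
  simp only [mul_pow, mul_zero, zero_mul, zero_sub]

theorem integrable_hmu_gaussianReal (hμ : 0 < μ) (v : ℝ≥0) :
    Integrable (hmu μ) (gaussianReal 0 v) := by
  refine ((memLp_id_gaussianReal 1).integrable le_rfl).abs.mono'
    (continuous_hmu hμ).aestronglyMeasurable (.of_forall fun z => ?_)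
  simpa only [one_mul, Real.norm_eq_abs, id] using abs_le_mul_abs_of_hasDerivAt_of_abs_le
    (hasDerivAt_hmu hμ) hmu_zero abs_hmuDeriv_le_one z

theorem integral_hmu_gaussianReal (hμ : 0 < μ) {v : ℝ} (hv : 0 ≤ v) :
    ∫ z, hmu μ z ∂gaussianReal 0 v.toNNReal = gaussHmu μ √v := by
  have hscale : gaussianReal 0 v.toNNReal = (gaussianReal 0 1).map (√v * ·) := by
    rw [gaussianReal_map_const_mul, mul_zero, mul_one]
    congr
    exact NNReal.eq ((Real.coe_toNNReal v hv).trans (Real.sq_sqrt hv).symm)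
  rw [hscale, integral_map (by fun_prop) (continuous_hmu hμ).aestronglyMeasurable, gaussHmu]

theorem integral_hmu_sum_mul_pi_bg (hθ : θ ∈ Set.Icc 0 1) (hμ : 0 < μ) (q : ι → ℝ) :
    ∫ x, hmu μ (∑ i, q i * x i) ∂(Measure.pi fun _ => bg θ) =
      ∑ J : Finset ι, supportWeight θ J * gaussHmu μ √(∑ i ∈ J, q i ^ 2) := by
  have hsum : Measurable fun x : ι → ℝ => ∑ i, q i * x i := by fun_prop
  rw [← integral_map (f := hmu μ) hsum.aemeasurable (continuous_hmu hμ).aestronglyMeasurable,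
    map_sum_mul_pi_bg hθ, integral_finsetSum_measure fun J _ =>
      (integrable_hmu_gaussianReal hμ _).smul_measure_nnreal]
  refine Finset.sum_congr rfl fun J _ => ?_
  rw [integral_smul_nnreal_measure,
    integral_hmu_gaussianReal hμ (Finset.sum_nonneg fun i _ => sq_nonneg (q i)), NNReal.smul_def,
    Real.coe_toNNReal _ (supportWeight_nonneg hθ J), smul_eq_mul]

end BernoulliGaussian

section Regularity

variable {ι : Type*} [Fintype ι] {θ μ : ℝ}

/-- The linear form `q ↦ qᵀ x`. -/
def dotProductCLM (x : ι → ℝ) : (ι → ℝ) →L[ℝ] ℝ :=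
  ∑ i, x i • ContinuousLinearMap.proj (R := ℝ) (φ := fun _ : ι => ℝ) i

theorem dotProductCLM_apply (x q : ι → ℝ) : dotProductCLM x q = ∑ i, q i * x i := by
  simp [dotProductCLM, mul_comm]

theorem memLp_dotProductCLM {p : ℝ≥0∞} {ν : Measure (ι → ℝ)}
    (hν : ∀ i, MemLp (fun x : ι → ℝ => x i) p ν) : MemLp (dotProductCLM (ι := ι)) p ν :=
  memLp_finsetSum Finset.univ
    (f := fun (i : ι) (x : ι → ℝ) => x i • ContinuousLinearMap.proj (R := ℝ)
      (φ := fun _ : ι => ℝ) i) fun i _ =>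
    (hν i).of_le_mul ((hν i).aestronglyMeasurable.smul aestronglyMeasurable_const)
      (.of_forall fun _ => (norm_smul _ _).trans_le (mul_comm _ _).le)

theorem exists_hasFDerivAt_integral_hmu {ν : Measure (ι → ℝ)} [IsFiniteMeasure ν]
    (hν : ∀ i, MemLp (fun x : ι → ℝ => x i) 2 ν) (hμ : 0 < μ) :
    ∃ D : (ι → ℝ) → (ι → ℝ) →L[ℝ] ℝ,
      (∀ q, HasFDerivAt (fun q => ∫ x, hmu μ (∑ i, q i * x i) ∂ν) (D q) q) ∧
        Differentiable ℝ D := by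
  have hL := memLp_dotProductCLM hν
  have hmeas := hL.aestronglyMeasurable
  have hsmul : Continuous fun L : (ι → ℝ) →L[ℝ] ℝ => L.smulRight (1 : ℝ) := by fun_prop
  refine ⟨fun q => ∫ x, hmuDeriv μ (dotProductCLM x q) • (dotProductCLM x).smulRight (1 : ℝ) ∂ν,
    fun q => ?_, fun q => ?_⟩
  · have h := (hasFDerivAt_integral_comp_smul (hasDerivAt_hmu hμ) hmu_zero continuous_hmuDeriv
      abs_hmuDeriv_le_one hmeas (c := fun _ => (1 : ℝ)) aestronglyMeasurable_const
      (by simpa using (hL.integrable one_le_two).norm) q).2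
    simpa only [smul_eq_mul, mul_one, dotProductCLM_apply] using h
  · refine (hasFDerivAt_integral_comp_smul hasDerivAt_hmuDeriv hmuDeriv_zero
      (continuous_hmuDeriv₂ hμ) (abs_hmuDeriv₂_le hμ) hmeas
      (hsmul.comp_aestronglyMeasurable hmeas) ?_ q).2.differentiableAt
    simpa [← sq] using hL.integrable_norm_pow two_ne_zero

theorem memLp_two_eval_pi_bg (hθ : θ ∈ Set.Icc 0 1) (i : ι) :
    MemLp (fun x : ι → ℝ => x i) 2 (Measure.pi fun _ => bg θ) := by
  have := isProbabilityMeasure_bg hθ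
  have hcoord : MemLp id 2 (bg θ) :=
    (memLp_two_iff_integrable_sq (by fun_prop)).2 <|
      integrable_sq_gaussianReal.smul_measure_nnreal.add_measure
        (Integrable.smul_measure_nnreal (integrable_dirac (by simp)))
  exact hcoord.comp_measurePreserving (measurePreserving_eval (fun _ : ι => bg θ) i)

variable {n : ℕ} {w : EuclideanSpace ℝ (Fin (n - 1))}

theorem contDiffAt_qmap (hw : ‖w‖ < 1) : ContDiffAt ℝ 2 (qmap n) w := by
  refine contDiffAt_pi.2 fun i => ?_
  by_cases h : (i : ℕ) < n - 1
  · simp only [qmap, h, dif_pos]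
    exact (EuclideanSpace.proj (𝕜 := ℝ) (⟨i, h⟩ : Fin (n - 1))).contDiff.contDiffAt
  · simp only [qmap, h, dif_neg, not_false_eq_true]
    refine (contDiffAt_const.sub (contDiff_norm_sq ℝ).contDiffAt).sqrt ?_
    exact (sub_pos.2 ((sq_lt_one_iff₀ (norm_nonneg w)).2 hw)).ne'

theorem eventually_norm_lt_one (hw : ‖w‖ < 1) : ∀ᶠ y in 𝓝 w, ‖y‖ < 1 :=
  continuous_norm.continuousAt.eventually_lt_const hw

theorem differentiableAt_Gexp_and_fderiv (hθ : θ ∈ Set.Icc 0 1) (hμ : 0 < μ) (hw : ‖w‖ < 1) :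
    DifferentiableAt ℝ (Gexp n θ μ) w ∧ DifferentiableAt ℝ (fderiv ℝ (Gexp n θ μ)) w := by
  have := isProbabilityMeasure_bg hθ
  obtain ⟨D, hD, hD'⟩ := exists_hasFDerivAt_integral_hmu
    (memLp_two_eval_pi_bg (ι := Fin n) hθ) hμ
  have hq {y : EuclideanSpace ℝ (Fin (n - 1))} (hy : ‖y‖ < 1) : DifferentiableAt ℝ (qmap n) y :=
    (contDiffAt_qmap hy).differentiableAt two_ne_zero
  have hG {y : EuclideanSpace ℝ (Fin (n - 1))} (hy : ‖y‖ < 1) :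
      HasFDerivAt (Gexp n θ μ) ((D (qmap n y)).comp (fderiv ℝ (qmap n) y)) y :=
    (hD (qmap n y)).comp y (hq hy).hasFDerivAt
  refine ⟨(hG hw).differentiableAt, ?_⟩
  have hfderiv : fderiv ℝ (Gexp n θ μ) =ᶠ[𝓝 w]
      fun y => (D (qmap n y)).comp (fderiv ℝ (qmap n) y) :=
    (eventually_norm_lt_one hw).mono fun y hy => (hG hy).fderiv
  refine DifferentiableAt.congr_of_eventuallyEq ?_ hfderiv
  exact ((hD' _).comp w (hq hw)).clm_comp
    (((contDiffAt_qmap hw).fderiv_right (m := 1) (by norm_num)).differentiableAt one_ne_zero)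

end Regularity

section SecondDerivative

/-- `f` is differentiable near `x` and its derivative is differentiable at `x`, with derivative
`f''`. -/
def HasSecondDerivAt (f : ℝ → ℝ) (f'' x : ℝ) : Prop :=
  ∃ f' : ℝ → ℝ, (∀ᶠ t in 𝓝 x, HasDerivAt f (f' t) t) ∧ HasDerivAt f' f'' x

variable {f g : ℝ → ℝ} {f'' x : ℝ}

theorem HasSecondDerivAt.congr_of_eventuallyEq (h : HasSecondDerivAt f f'' x)
    (hgf : g =ᶠ[𝓝 x] f) : HasSecondDerivAt g f'' x := by
  obtain ⟨f', hf, hf'⟩ := h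
  refine ⟨f', ?_, hf'⟩
  filter_upwards [hf, hgf.eventuallyEq_nhds] with t ht heq using ht.congr_of_eventuallyEq heq

theorem HasSecondDerivAt.sum_const_mul {κ : Type*} {s : Finset κ} {f : κ → ℝ → ℝ} {f'' : κ → ℝ}
    (p : κ → ℝ) (h : ∀ i ∈ s, HasSecondDerivAt (f i) (f'' i) x) :
    HasSecondDerivAt (fun t => ∑ i ∈ s, p i * f i t) (∑ i ∈ s, p i * f'' i) x := by
  choose! f' hf hf' using h
  refine ⟨fun t => ∑ i ∈ s, p i * f' i t, ?_,
    HasDerivAt.fun_sum fun i hi => (hf' i hi).const_mul (p i)⟩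
  filter_upwards [(Filter.eventually_all_finset s).2 hf] with t ht
  exact HasDerivAt.fun_sum fun i hi => (ht i hi).const_mul (p i)

theorem hasSecondDerivAt_comp {f' f'' g g' : ℝ → ℝ} {g'' : ℝ}
    (hf : ∀ s, HasDerivAt f (f' s) s) (hf' : ∀ s, HasDerivAt f' (f'' s) s)
    (hg : ∀ᶠ t in 𝓝 x, HasDerivAt g (g' t) t) (hg' : HasDerivAt g' g'' x) :
    HasSecondDerivAt (fun t => f (g t)) (f'' (g x) * g' x ^ 2 + f' (g x) * g'') x := by
  refine ⟨fun t => f' (g t) * g' t, ?_, ?_⟩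
  · filter_upwards [hg] with t ht using (hf (g t)).comp t ht
  · refine (((hf' (g x)).comp x hg.self_of_nhds).mul hg').congr_deriv ?_
    rw [Function.comp_apply]
    ring

variable {E : Type*} [NormedAddCommGroup E] [InnerProductSpace ℝ E] [CompleteSpace E]
  {G : E → ℝ} {w : E}

theorem inner_fderiv_gradient (hG : DifferentiableAt ℝ (fderiv ℝ G) w) (u v : E) :
    ⟪fderiv ℝ (gradient G) w u, v⟫ = fderiv ℝ (fderiv ℝ G) w u v := by
  let L : (E →L[ℝ] ℝ) ≃ₗᵢ[ℝ] E := (InnerProductSpace.toDual ℝ E).symm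
  have hgrad : fderiv ℝ (gradient G) w = L.toContinuousLinearEquiv.toContinuousLinearMap.comp
      (fderiv ℝ (fderiv ℝ G) w) :=
    (L.toContinuousLinearEquiv.hasFDerivAt.comp w hG.hasFDerivAt).fderiv
  rw [hgrad]
  exact InnerProductSpace.toDual_symm_apply

theorem inner_fderiv_gradient_eq_of_hasSecondDerivAt
    (hG : ∀ᶠ y in 𝓝 w, DifferentiableAt ℝ G y) (hG' : DifferentiableAt ℝ (fderiv ℝ G) w)
    {γ : ℝ → E} {v : E} (hγ : ∀ t, HasDerivAt γ v t) (hx : γ x = w)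
    (h : HasSecondDerivAt (fun t => G (γ t)) f'' x) :
    ⟪fderiv ℝ (gradient G) w v, v⟫ = f'' := by
  subst hx
  obtain ⟨g', hg, hg'⟩ := h
  have hfirst : (fun t => fderiv ℝ G (γ t) v) =ᶠ[𝓝 x] g' := by
    filter_upwards [hg, (hγ x).continuousAt.tendsto.eventually hG] with t ht hGt
    exact (hGt.hasFDerivAt.comp_hasDerivAt t (hγ t)).unique ht
  have hsecond : HasDerivAt (fun t => fderiv ℝ G (γ t) v)
      (fderiv ℝ (fderiv ℝ G) (γ x) v v) x :=
    (ContinuousLinearMap.apply ℝ ℝ v).hasFDerivAt.comp_hasDerivAt x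
      (hG'.hasFDerivAt.comp_hasDerivAt x (hγ x))
  rw [inner_fderiv_gradient hG']
  exact (hsecond.congr_of_eventuallyEq hfirst.symm).unique hg'

end SecondDerivative

section Ray

variable {m : ℕ} {w : EuclideanSpace ℝ (Fin (m + 1 - 1))}

theorem qmap_castSucc (w : EuclideanSpace ℝ (Fin (m + 1 - 1))) (i : Fin m) :
    qmap (m + 1) w i.castSucc = w i :=
  dif_pos i.2

theorem qmap_last (w : EuclideanSpace ℝ (Fin (m + 1 - 1))) :
    qmap (m + 1) w (Fin.last m) = √(1 - ‖w‖ ^ 2) :=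
  dif_neg (by simp)

theorem sum_compl_last_qmap_sq (w : EuclideanSpace ℝ (Fin (m + 1 - 1))) :
    ∑ i ∈ {Fin.last m}ᶜ, qmap (m + 1) w i ^ 2 = ‖w‖ ^ 2 := by
  have h := Finset.sum_compl_add_sum {Fin.last m} fun i => qmap (m + 1) w i ^ 2
  rw [Fin.sum_univ_castSucc, Finset.sum_singleton, add_left_inj] at h
  simp only [h, qmap_castSucc, EuclideanSpace.real_norm_sq_eq]
  rfl

theorem sum_qmap_sq (hw : ‖w‖ ≤ 1) : ∑ i, qmap (m + 1) w i ^ 2 = 1 := by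
  have h1 : 0 ≤ 1 - ‖w‖ ^ 2 := sub_nonneg.2 (pow_le_one₀ (norm_nonneg w) hw)
  rw [← Finset.sum_compl_add_sum {Fin.last m}, sum_compl_last_qmap_sq, Finset.sum_singleton,
    qmap_last, Real.sq_sqrt h1, add_sub_cancel]

theorem qmap_smul_of_ne_last {i : Fin (m + 1)} (hi : i ≠ Fin.last m) (t : ℝ) :
    qmap (m + 1) (t • w) i = t * qmap (m + 1) w i := by
  obtain ⟨j, rfl⟩ := Fin.exists_castSucc_eq.2 hi
  rw [qmap_castSucc, qmap_castSucc, PiLp.smul_apply, smul_eq_mul]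

theorem sum_qmap_smul_sq_of_last_notMem {J : Finset (Fin (m + 1))} (hJ : Fin.last m ∉ J) (t : ℝ) :
    ∑ i ∈ J, qmap (m + 1) (t • w) i ^ 2 = t ^ 2 * ∑ i ∈ J, qmap (m + 1) w i ^ 2 := by
  rw [Finset.mul_sum]
  refine Finset.sum_congr rfl fun i hi => ?_
  rw [qmap_smul_of_ne_last (ne_of_mem_of_not_mem hi hJ), mul_pow]

theorem sum_qmap_smul_sq_of_last_mem {J : Finset (Fin (m + 1))} (hJ : Fin.last m ∈ J) {t : ℝ}
    (ht : ‖t • w‖ ≤ 1) :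
    ∑ i ∈ J, qmap (m + 1) (t • w) i ^ 2 = 1 - (∑ i ∈ Jᶜ, qmap (m + 1) w i ^ 2) * t ^ 2 := by
  have hcompl := sum_qmap_smul_sq_of_last_notMem (w := w) (Finset.notMem_compl.2 hJ) t
  have hsum := Finset.sum_compl_add_sum J fun i => qmap (m + 1) (t • w) i ^ 2
  rw [sum_qmap_sq ht, hcompl] at hsum
  linarith

theorem hasDerivAt_sqrt_one_sub_mul_sq {α t : ℝ} (ht : 0 < 1 - α * t ^ 2) :
    HasDerivAt (fun t => √(1 - α * t ^ 2)) (-(α * t) / √(1 - α * t ^ 2)) t := by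
  have h : HasDerivAt (fun t => 1 - α * t ^ 2) (-(α * (2 * t))) t := by
    simpa using (((hasDerivAt_id t).pow 2).const_mul α).const_sub 1
  refine (h.sqrt ht.ne').congr_deriv ?_
  rw [← mul_div_mul_left (-(α * t)) _ two_ne_zero]
  ring

theorem hasDerivAt_deriv_sqrt_one_sub_mul_sq {α t : ℝ} (ht : 0 < 1 - α * t ^ 2) :
    HasDerivAt (fun t => -(α * t) / √(1 - α * t ^ 2)) (-(α / √(1 - α * t ^ 2) ^ 3)) t := by
  have hr := Real.sqrt_pos.2 ht
  have hnum : HasDerivAt (fun t => -(α * t)) (-α) t := by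
    simpa using ((hasDerivAt_id t).const_mul α).fun_neg
  refine (hnum.div (hasDerivAt_sqrt_one_sub_mul_sq ht) hr.ne').congr_deriv ?_
  have hsq := Real.sq_sqrt ht.le
  field_simp
  linear_combination (-α) * hsq

theorem exists_hasSecondDerivAt_gaussHmu_mul {μ : ℝ} (hμ : 0 < μ) (σ : ℝ) :
    ∃ d ≤ μ, HasSecondDerivAt (fun t => gaussHmu μ (t * σ)) d 1 := by
  refine ⟨_, ?_, hasSecondDerivAt_comp (hasDerivAt_gaussHmu hμ) (hasDerivAt_gaussHmuDeriv hμ)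
    (.of_forall fun t => hasDerivAt_mul_const σ) (hasDerivAt_const 1 σ)⟩
  rw [one_mul, mul_zero, add_zero, mul_comm]
  exact sq_mul_gaussHmuDeriv₂_le hμ σ

theorem exists_hasSecondDerivAt_gaussHmu_sqrt {μ α : ℝ} (hμ : 0 < μ) (hα : α ∈ Set.Ico 0 1)
    (hμα : 2 * μ ≤ √(2 / π) * √(1 - α)) :
    ∃ d ≤ -(α * (√(2 / π) - 2 * μ / √(1 - α))),
      HasSecondDerivAt (fun t => gaussHmu μ √(1 - α * t ^ 2)) d 1 := by
  have hpos : 0 < 1 - α * (1 : ℝ) ^ 2 := by linarith [hα.2]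
  have hnear : ∀ᶠ t in 𝓝 (1 : ℝ), 0 < 1 - α * t ^ 2 :=
    (show ContinuousAt (fun t : ℝ => 1 - α * t ^ 2) 1 by fun_prop).eventually_const_lt hpos
  refine ⟨_, ?_, hasSecondDerivAt_comp (hasDerivAt_gaussHmu hμ) (hasDerivAt_gaussHmuDeriv hμ)
    (hnear.mono fun t ht => hasDerivAt_sqrt_one_sub_mul_sq ht)
    (hasDerivAt_deriv_sqrt_one_sub_mul_sq hpos)⟩
  simp only [one_pow, mul_one] at hpos ⊢
  set r := √(1 - α)
  set K := √(2 / π)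
  have hr : 0 < r := Real.sqrt_pos.2 hpos
  have hr1 : r ^ 4 ≤ r :=
    pow_le_of_le_one hr.le (Real.sqrt_le_one.2 (by linarith [hα.1])) four_ne_zero
  have hφ'' : α * (r ^ 2 * gaussHmuDeriv₂ μ r) ≤ μ :=
    (mul_le_mul_of_nonneg_left (sq_mul_gaussHmuDeriv₂_le hμ r) hα.1).trans
      (mul_le_of_le_one_left hμ.le hα.2.le)
  have hφ' := le_mul_gaussHmuDeriv hμ hr.le
  have hgap : 0 ≤ K - 2 * μ / r := sub_nonneg.2 ((div_le_iff₀ hr).2 hμα)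
  calc gaussHmuDeriv₂ μ r * (-α / r) ^ 2 + gaussHmuDeriv μ r * -(α / r ^ 3)
      = α * ((α * (r ^ 2 * gaussHmuDeriv₂ μ r) - r * gaussHmuDeriv μ r) / r ^ 4) := by
        field_simp
        ring
    _ ≤ α * (-(K - 2 * μ / r)) := by
        refine mul_le_mul_of_nonneg_left ((div_le_iff₀ (by positivity)).2 ?_) hα.1
        calc α * (r ^ 2 * gaussHmuDeriv₂ μ r) - r * gaussHmuDeriv μ r
            ≤ -(K - 2 * μ / r) * r := by
              rw [neg_mul, sub_mul, div_mul_cancel₀ _ hr.ne']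
              linarith
          _ ≤ -(K - 2 * μ / r) * r ^ 4 :=
              mul_le_mul_of_nonpos_left hr1 (neg_nonpos.2 hgap)
    _ = -(α * (K - 2 * μ / r)) := by ring

theorem eventually_norm_smul_lt_one (hw : ‖w‖ < 1) : ∀ᶠ t in 𝓝 (1 : ℝ), ‖t • w‖ < 1 :=
  (show ContinuousAt (fun t : ℝ => ‖t • w‖) 1 by fun_prop).eventually_lt_const (by simpa using hw)

theorem exists_hasSecondDerivAt_gaussHmu_qmap_of_last_notMem {μ : ℝ} (hμ : 0 < μ)
    {J : Finset (Fin (m + 1))} (hJ : Fin.last m ∉ J) :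
    ∃ d ≤ μ, HasSecondDerivAt (fun t : ℝ => gaussHmu μ √(∑ i ∈ J, qmap (m + 1) (t • w) i ^ 2))
      d 1 := by
  obtain ⟨d, hd, h⟩ :=
    exists_hasSecondDerivAt_gaussHmu_mul hμ √(∑ i ∈ J, qmap (m + 1) w i ^ 2)
  refine ⟨d, hd, h.congr_of_eventuallyEq ?_⟩
  filter_upwards [lt_mem_nhds (zero_lt_one' ℝ)] with t ht
  rw [sum_qmap_smul_sq_of_last_notMem hJ, Real.sqrt_mul (sq_nonneg t), Real.sqrt_sq ht.le]

theorem exists_hasSecondDerivAt_gaussHmu_qmap_of_last_mem {μ : ℝ} (hμ : 0 < μ) (hw : ‖w‖ < 1)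
    (hμw : 2 * μ ≤ √(2 / π) * √(1 - ‖w‖ ^ 2)) {J : Finset (Fin (m + 1))} (hJ : Fin.last m ∈ J) :
    ∃ d ≤ -(√(2 / π) - 2 * μ / √(1 - ‖w‖ ^ 2)) * ∑ i ∈ Jᶜ, qmap (m + 1) w i ^ 2,
      HasSecondDerivAt (fun t : ℝ => gaussHmu μ √(∑ i ∈ J, qmap (m + 1) (t • w) i ^ 2)) d 1 := by
  set α := ∑ i ∈ Jᶜ, qmap (m + 1) w i ^ 2
  have hα0 : 0 ≤ α := Finset.sum_nonneg fun i _ => sq_nonneg _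
  have hw1 : ‖w‖ ^ 2 < 1 := pow_lt_one₀ (norm_nonneg w) hw two_ne_zero
  have hαw : α ≤ ‖w‖ ^ 2 := by
    rw [← sum_compl_last_qmap_sq]
    exact Finset.sum_le_sum_of_subset_of_nonneg
      (Finset.compl_subset_compl.2 (Finset.singleton_subset_iff.2 hJ)) fun i _ _ => sq_nonneg _
  have hsqrt : √(1 - ‖w‖ ^ 2) ≤ √(1 - α) := Real.sqrt_le_sqrt (by linarith)
  have : 0 < √(1 - ‖w‖ ^ 2) := Real.sqrt_pos.2 (sub_pos.2 hw1)
  obtain ⟨d, hd, h⟩ := exists_hasSecondDerivAt_gaussHmu_sqrt hμ ⟨hα0, hαw.trans_lt hw1⟩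
    (hμw.trans (mul_le_mul_of_nonneg_left hsqrt (Real.sqrt_nonneg _)))
  refine ⟨d, hd.trans ?_, h.congr_of_eventuallyEq ?_⟩
  · rw [neg_mul, mul_comm α]
    gcongr
  · filter_upwards [eventually_norm_smul_lt_one hw] with t ht
    rw [sum_qmap_smul_sq_of_last_mem hJ ht.le]

theorem exists_hasSecondDerivAt_Gexp_smul {θ μ : ℝ} (hθ : θ ∈ Set.Icc 0 1) (hμ : 0 < μ)
    (hw : ‖w‖ < 1) (hμw : 2 * μ ≤ √(2 / π) * √(1 - ‖w‖ ^ 2)) :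
    ∃ d ≤ (1 - θ) * (μ - θ * (√(2 / π) - 2 * μ / √(1 - ‖w‖ ^ 2)) * ‖w‖ ^ 2),
      HasSecondDerivAt (fun t : ℝ => Gexp (m + 1) θ μ (t • w)) d 1 := by
  set κ := √(2 / π) - 2 * μ / √(1 - ‖w‖ ^ 2)
  have hterm (J : Finset (Fin (m + 1))) :
      ∃ d ≤ if Fin.last m ∈ J then -κ * ∑ i ∈ Jᶜ, qmap (m + 1) w i ^ 2 else μ,
        HasSecondDerivAt (fun t : ℝ => gaussHmu μ √(∑ i ∈ J, qmap (m + 1) (t • w) i ^ 2)) d 1 := by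
    split_ifs with hJ
    · exact exists_hasSecondDerivAt_gaussHmu_qmap_of_last_mem hμ hw hμw hJ
    · exact exists_hasSecondDerivAt_gaussHmu_qmap_of_last_notMem hμ hJ
  choose d hd h using hterm
  have hG : (fun t : ℝ => Gexp (m + 1) θ μ (t • w)) = fun t => ∑ J : Finset (Fin (m + 1)),
      supportWeight θ J * gaussHmu μ √(∑ i ∈ J, qmap (m + 1) (t • w) i ^ 2) :=
    funext fun t => integral_hmu_sum_mul_pi_bg hθ hμ _
  refine ⟨∑ J, supportWeight θ J * d J, ?_,
    hG ▸ HasSecondDerivAt.sum_const_mul (supportWeight θ) fun J _ => h J⟩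
  calc ∑ J, supportWeight θ J * d J
      ≤ ∑ J : Finset (Fin (m + 1)), supportWeight θ J *
          if Fin.last m ∈ J then -κ * ∑ i ∈ Jᶜ, qmap (m + 1) w i ^ 2 else μ :=
        Finset.sum_le_sum fun J _ =>
          mul_le_mul_of_nonneg_left (hd J) (supportWeight_nonneg hθ J)
    _ = -κ * (∑ J : Finset (Fin (m + 1)) with Fin.last m ∈ J,
          supportWeight θ J * ∑ i ∈ Jᶜ, qmap (m + 1) w i ^ 2) +
        (∑ J : Finset (Fin (m + 1)) with Fin.last m ∉ J, supportWeight θ J) * μ := by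
        simp only [mul_ite, Finset.sum_ite, Finset.mul_sum, Finset.sum_mul, mul_left_comm]
    _ = (1 - θ) * (μ - θ * κ * ‖w‖ ^ 2) := by
        rw [sum_supportWeight_mul_sum_compl, sum_supportWeight_notMem, sum_compl_last_qmap_sq]
        ring

theorem inner_fderiv_gradient_Gexp_le {θ μ : ℝ} (hθ : θ ∈ Set.Icc 0 1) (hμ : 0 < μ)
    (hw : ‖w‖ < 1) (hμw : 2 * μ ≤ √(2 / π) * √(1 - ‖w‖ ^ 2)) :
    ⟪fderiv ℝ (gradient (Gexp (m + 1) θ μ)) w w, w⟫ ≤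
      (1 - θ) * (μ - θ * (√(2 / π) - 2 * μ / √(1 - ‖w‖ ^ 2)) * ‖w‖ ^ 2) := by
  obtain ⟨d, hd, hG⟩ := exists_hasSecondDerivAt_Gexp_smul hθ hμ hw hμw
  rwa [inner_fderiv_gradient_eq_of_hasSecondDerivAt
    ((eventually_norm_lt_one hw).mono fun y hy => (differentiableAt_Gexp_and_fderiv hθ hμ hy).1)
    (differentiableAt_Gexp_and_fderiv hθ hμ hw).2
    (fun t => by simpa using (hasDerivAt_id t).smul_const w) (one_smul ℝ w) hG]

end Ray

theorem one_div_le_sqrt_one_sub_sq {N r : ℝ} (hN : 1 ≤ N) (hr : 0 ≤ r)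
    (hrN : r ≤ √((4 * N - 1) / (4 * N))) : 1 / (2 * N) ≤ √(1 - r ^ 2) := by
  have hsq : r ^ 2 ≤ (4 * N - 1) / (4 * N) :=
    (Real.le_sqrt hr (div_nonneg (by linarith) (by linarith))).1 hrN
  refine Real.le_sqrt_of_sq_le ?_
  calc (1 / (2 * N)) ^ 2 = 1 / (4 * N) * (1 / N) := by ring
    _ ≤ 1 / (4 * N) := mul_le_of_le_one_right (by positivity) ((div_le_one (by positivity)).2 hN)
    _ = 1 - (4 * N - 1) / (4 * N) := by field_simp; ring
    _ ≤ 1 - r ^ 2 := by linarith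

theorem div_le_mul_min_sq_sqrt {n : ℕ} {θ r : ℝ} (hθ : θ ∈ Set.Icc 0 (1 / 2))
    (hr : 1 / (20 * √5) ≤ r) (hrn : r ≤ √((4 * (n : ℝ) - 1) / (4 * n))) :
    θ / n ≤ 2000 * min (θ * r ^ 2) √(1 - r ^ 2) := by
  have hr0 : 0 < r := lt_of_lt_of_le (by positivity) hr
  have hn : (1 : ℝ) ≤ n := by
    obtain rfl | hn := Nat.eq_zero_or_pos n
    · simp at hrn
      linarith
    · exact_mod_cast hn
  have hr2 : 1 / 2000 ≤ r ^ 2 :=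
    calc (1 / 2000 : ℝ) = (1 / (20 * √5)) ^ 2 := by
          rw [div_pow, mul_pow, Real.sq_sqrt (by norm_num)]
          norm_num
      _ ≤ r ^ 2 := pow_le_pow_left₀ (by positivity) hr 2
  have hsqrt : θ / n ≤ √(1 - r ^ 2) :=
    calc θ / n ≤ 1 / 2 / n := div_le_div_of_nonneg_right hθ.2 (by positivity)
      _ = 1 / (2 * n) := div_div _ _ _
      _ ≤ √(1 - r ^ 2) := one_div_le_sqrt_one_sub_sq hn hr0.le hrn
  rw [mul_min_of_nonneg _ _ (by norm_num), le_min_iff]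
  constructor
  · calc θ / n ≤ θ := div_le_self hθ.1 hn
      _ ≤ 2000 * (θ * r ^ 2) := by nlinarith [hθ.1]
  · linarith [Real.sqrt_nonneg (1 - r ^ 2)]

theorem statement4_general {n : ℕ} {θ μ : ℝ} {w : EuclideanSpace ℝ (Fin (n - 1))}
    (hθ : θ ∈ Set.Icc 0 1) (hμ : 0 < μ)
    (hμw : μ ≤ √(2 / π) / 6 * min (θ * ‖w‖ ^ 2) √(1 - ‖w‖ ^ 2)) :
    ⟪fderiv ℝ (gradient (Gexp n θ μ)) w w, w⟫ / ‖w‖ ^ 2 ≤ -(θ * (1 - θ) / √(2 * π)) := by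
  rw [mul_min_of_nonneg _ _ (by positivity), le_min_iff] at hμw
  obtain ⟨hμθ, hμr⟩ := hμw
  set K := √(2 / π) with hK
  set r := √(1 - ‖w‖ ^ 2)
  have hr : 0 < r := pos_of_mul_pos_right (hμ.trans_le hμr) (by positivity)
  have hw1 : ‖w‖ < 1 :=
    (sq_lt_one_iff₀ (norm_nonneg w)).1 (sub_pos.1 (Real.sqrt_pos.1 hr))
  have hθw : 0 < θ * ‖w‖ ^ 2 := pos_of_mul_pos_right (hμ.trans_le hμθ) (by positivity)
  have hw0 : 0 < ‖w‖ ^ 2 := pos_of_mul_pos_right hθw hθ.1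
  obtain _ | m := n
  · simp [EuclideanSpace.norm_eq] at hw0
  have hμr' : 2 * μ ≤ K * r := by nlinarith
  have hμdiv : 2 * μ / r ≤ K / 3 := (div_le_iff₀ hr).2 (by linarith)
  have hκ : K * 2 / 3 * (θ * ‖w‖ ^ 2) ≤ (K - 2 * μ / r) * (θ * ‖w‖ ^ 2) :=
    mul_le_mul_of_nonneg_right (by linarith) hθw.le
  rw [div_le_iff₀ hw0]
  calc ⟪fderiv ℝ (gradient (Gexp (m + 1) θ μ)) w w, w⟫
      ≤ (1 - θ) * (μ - θ * (K - 2 * μ / r) * ‖w‖ ^ 2) :=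
        inner_fderiv_gradient_Gexp_le hθ hμ hw1 hμr'
    _ ≤ (1 - θ) * -(K / 2 * (θ * ‖w‖ ^ 2)) :=
        mul_le_mul_of_nonneg_left (by linarith) (sub_nonneg.2 hθ.2)
    _ = -(θ * (1 - θ) / √(2 * π)) * ‖w‖ ^ 2 := by
        rw [hK, sqrt_two_div_pi]
        ring

/-- Proposition: negative curvature region of the expected objective. -/
theorem statement4 :
    ∃ c : ℝ, 0 < c ∧
      ∀ (n : ℕ) (θ μ : ℝ), θ ∈ Set.Ioo (0 : ℝ) (1 / 2) → 0 < μ →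
        μ ≤ c * min (θ / n) ((n : ℝ) ^ (-(5 : ℝ) / 4)) →
        ∀ w : EuclideanSpace ℝ (Fin (n - 1)),
          1 / (20 * Real.sqrt 5) ≤ ‖w‖ →
          ‖w‖ ≤ Real.sqrt ((4 * (n : ℝ) - 1) / (4 * n)) →
          ⟪fderiv ℝ (gradient (Gexp n θ μ)) w w, w⟫ / ‖w‖ ^ 2 ≤
            -(θ / (2 * Real.sqrt (2 * π))) := by
  refine ⟨√(2 / π) / 6 / 2000, by positivity, fun n θ μ hθ hμ hμn w hw hwn => ?_⟩
  have hμw : μ ≤ √(2 / π) / 6 * min (θ * ‖w‖ ^ 2) √(1 - ‖w‖ ^ 2) :=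
    calc μ ≤ √(2 / π) / 6 / 2000 * (θ / n) :=
          hμn.trans (mul_le_mul_of_nonneg_left (min_le_left _ _) (by positivity))
      _ ≤ √(2 / π) / 6 / 2000 * (2000 * min (θ * ‖w‖ ^ 2) √(1 - ‖w‖ ^ 2)) :=
          mul_le_mul_of_nonneg_left
            (div_le_mul_min_sq_sqrt ⟨hθ.1.le, hθ.2.le⟩ hw hwn) (by positivity)
      _ = √(2 / π) / 6 * min (θ * ‖w‖ ^ 2) √(1 - ‖w‖ ^ 2) := by ring
  refine (statement4_general ⟨hθ.1.le, by linarith [hθ.2]⟩ hμ hμw).trans (neg_le_neg ?_)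
  rw [← div_div]
  gcongr
  nlinarith [hθ.1, hθ.2]

end
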